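/- arXiv:2310.00571 — 2 statements merged into one kernel-verified Lean document; each statement's English description precedes it below -/
import Mathlib

section
/- Consider the parametric linear program LP(θ). Fix an index set J ⊆ {1,…,m} with cardinality n such that G_J is invertible, and suppose there exists λ ∈ ℝᵐ with λ ≥ 0 componentwise, c + Gᵀλ = 0, and λ_j = 0 for every j ∉ J. Define the affine map x̂(θ) := G_J⁻¹ (w_J + F_J θ). Then for every θ ∈ ℝᵖ such that G x̂(θ) ≤ w + F θ (in particular for every θ in the critical region where additionally G_J̄ x̂(θ) < w_J̄ + F_J̄ θ), the point x̂(θ) is an optimal solution of LP(θ). -/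
open Matrix BigOperators

/-! Stationarity turns the objective into `-(lam ⬝ᵥ G *ᵥ x)`. Only the constraints in `J` carry a
nonzero multiplier, and all of these are active at `x̂(θ)`, so a feasible point cannot exceed
`x̂(θ)` in any of them. -/

lemma dotProduct_le_dotProduct_of_le_on_support {ι R : Type*} [Fintype ι]
    [NonUnitalNonAssocSemiring R] [PartialOrder R] [IsOrderedAddMonoid R] [PosMulMono R]
    {u v lam : ι → R} (hlam : 0 ≤ lam) (huv : ∀ j, lam j ≠ 0 → u j ≤ v j) :
    lam ⬝ᵥ u ≤ lam ⬝ᵥ v := by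
  refine Finset.sum_le_sum fun j _ ↦ ?_
  obtain hj | hj := eq_or_ne (lam j) 0
  · simp [hj]
  · exact mul_le_mul_of_nonneg_left (huv j hj) (hlam j)

lemma dotProduct_eq_neg_of_add_transpose_mulVec_eq_zero {ι κ R : Type*} [Fintype ι] [Fintype κ]
    [NonUnitalCommRing R] {c : ι → R} {G : Matrix κ ι R} {lam : κ → R}
    (hstat : c + Gᵀ *ᵥ lam = 0) (x : ι → R) : c ⬝ᵥ x = -(lam ⬝ᵥ G *ᵥ x) := by
  rw [eq_neg_of_add_eq_zero_left hstat, neg_dotProduct, mulVec_transpose, dotProduct_mulVec]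

section BasicPoint

variable {ι κ R : Type*} [Fintype ι] [DecidableEq ι] [CommRing R]

/-- The basic point of the system `G x ≤ b` determined by the rows `σ`: the solution of the
square system `G_J x = b_J`, where `σ` enumerates `J`. It is `x̂(θ)` for `b = w + F θ`. It is only
meaningful when `G_J` is invertible, since otherwise the matrix inverse is `0`. -/
noncomputable def basicPoint (G : Matrix κ ι R) (σ : ι → κ) (b : κ → R) : ι → R :=
  (G.submatrix σ id)⁻¹ *ᵥ (b ∘ σ)

lemma mulVec_basicPoint_apply {G : Matrix κ ι R} {σ : ι → κ}
    (hinv : IsUnit (G.submatrix σ id)) (b : κ → R) (i : ι) :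
    (G *ᵥ basicPoint G σ b) (σ i) = b (σ i) := by
  have hsolve : G.submatrix σ id *ᵥ basicPoint G σ b = b ∘ σ := by
    rw [basicPoint, mulVec_mulVec, mul_nonsing_inv _ ((isUnit_iff_isUnit_det _).mp hinv),
      one_mulVec]
  exact congrFun hsolve i

theorem stmt3_general [Fintype κ] [PartialOrder R] [IsOrderedRing R]
    {c : ι → R} {G : Matrix κ ι R} {σ : ι → κ} (hinv : IsUnit (G.submatrix σ id))
    {lam : κ → R} (hlam : 0 ≤ lam) (hstat : c + Gᵀ *ᵥ lam = 0)
    (hsupp : ∀ j ∉ Set.range σ, lam j = 0) {b : κ → R} {x : ι → R} (hx : G *ᵥ x ≤ b) :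
    c ⬝ᵥ basicPoint G σ b ≤ c ⬝ᵥ x := by
  have hactive : ∀ j, lam j ≠ 0 → (G *ᵥ x) j ≤ (G *ᵥ basicPoint G σ b) j := by
    intro j hj
    obtain ⟨i, rfl⟩ : j ∈ Set.range σ := not_imp_comm.mp (hsupp j) hj
    exact (hx (σ i)).trans_eq (mulVec_basicPoint_apply hinv b i).symm
  simpa only [dotProduct_eq_neg_of_add_transpose_mulVec_eq_zero hstat, neg_le_neg_iff]
    using dotProduct_le_dotProduct_of_le_on_support hlam hactive

end BasicPoint

/-- For the parametric LP `min cᵀx s.t. G x ≤ w + F θ`, fix an index set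
`J` of cardinality `n` (enumerated by the injection `σ : Fin n → Fin m`) with `G_J`
invertible, and suppose there is a multiplier `lam ≥ 0` with `c + Gᵀ lam = 0` and
`lam j = 0` for `j ∉ J`.  Let `x̂(θ) := G_J⁻¹ (w_J + F_J θ)`.  Then for every `θ` such
that `G x̂(θ) ≤ w + F θ` (in particular for every `θ` in the associated critical region),
the point `x̂(θ)` is an optimal solution of LP(θ). -/
theorem stmt3 {n m p : ℕ}
    (c : Fin n → ℝ) (G : Matrix (Fin m) (Fin n) ℝ) (w : Fin m → ℝ)
    (F : Matrix (Fin m) (Fin p) ℝ)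
    (σ : Fin n → Fin m) (hσ : Function.Injective σ)
    (hinv : IsUnit (G.submatrix σ (id : Fin n → Fin n)))
    (hlam : ∃ lam : Fin m → ℝ, (∀ j, 0 ≤ lam j) ∧
      c + Gᵀ.mulVec lam = 0 ∧ ∀ j : Fin m, j ∉ Set.range σ → lam j = 0) :
    ∀ θ : Fin p → ℝ,
      (∀ j, G.mulVec ((G.submatrix σ (id : Fin n → Fin n))⁻¹.mulVec
          (fun i => w (σ i) + (F.submatrix σ (id : Fin p → Fin p)).mulVec θ i)) j
        ≤ w j + F.mulVec θ j) →
      ∀ x' : Fin n → ℝ, (∀ j, G.mulVec x' j ≤ w j + F.mulVec θ j) →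
        c ⬝ᵥ ((G.submatrix σ (id : Fin n → Fin n))⁻¹.mulVec
          (fun i => w (σ i) + (F.submatrix σ (id : Fin p → Fin p)).mulVec θ i)) ≤ c ⬝ᵥ x' := by
  obtain ⟨lam, hnonneg, hstat, hsupp⟩ := hlam
  exact fun θ _ x' hx' ↦ stmt3_general (b := w + F *ᵥ θ) hinv hnonneg hstat hsupp hx'
end

section
/- Consider the parametric linear program LP(θ). Fix an index set J ⊆ {1,…,m} with cardinality n such that G_J is invertible, and suppose there exists λ ∈ ℝᵐ with λ ≥ 0 componentwise, c + Gᵀλ = 0, and λ_j = 0 for every j ∉ J. Then for every θ ∈ ℝᵖ such that x̂(θ) := G_J⁻¹ (w_J + F_J θ) satisfies G x̂(θ) ≤ w + F θ, the optimal value of LP(θ) equals cᵀ G_J⁻¹ (w_J + F_J θ); consequently, on this set of parameters the optimal-value function is an affine function of θ. -/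
open Matrix BigOperators

/-!
Stationarity `c = -Gᵀ lam` turns the objective into `-(lam ⬝ᵥ G x)`, so a nonnegative `lam` bounds
it below by `-(lam ⬝ᵥ b)` on `G x ≤ b`. A point at which every constraint with nonzero multiplier
is tight attains this bound; `G_J⁻¹ b_J` is such a point when `lam` vanishes off `J`. Since the
infimum is then a minimum, no junk value of the real `sInf` is involved.
-/

namespace LinearProgram

variable {R ι κ : Type*} [Fintype κ] {c : κ → R} {G : Matrix ι κ R} {lam b : ι → R} {x : κ → R}

/-- The values taken on the feasible set by the objective of the linear program
`minimize c ⬝ᵥ x` subject to `G *ᵥ x ≤ b`; the optimal value is their infimum. -/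
def objectiveValues [NonUnitalNonAssocSemiring R] [LE R]
    (c : κ → R) (G : Matrix ι κ R) (b : ι → R) : Set R :=
  {v | ∃ x, G *ᵥ x ≤ b ∧ v = c ⬝ᵥ x}

/-- The point `G_J⁻¹ b_J` at which the constraints of `G *ᵥ x ≤ b` indexed by `J` are tight. The
index set `J` is encoded as the range of `σ`, so that `G_J` is a square matrix indexed by `κ`. -/
noncomputable def basicSolution [CommRing R] [DecidableEq κ]
    (G : Matrix ι κ R) (b : ι → R) (σ : κ → ι) : κ → R :=
  (G.submatrix σ id)⁻¹ *ᵥ (b ∘ σ)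

theorem mulVec_basicSolution_apply [CommRing R] [DecidableEq κ] {σ : κ → ι}
    (hinv : IsUnit (G.submatrix σ id)) (b : ι → R) (i : κ) :
    (G *ᵥ basicSolution G b σ) (σ i) = b (σ i) := by
  have hdet : IsUnit (G.submatrix σ id).det := (isUnit_iff_isUnit_det _).mp hinv
  have htight : G.submatrix σ id *ᵥ basicSolution G b σ = b ∘ σ := by
    rw [basicSolution, mulVec_mulVec, mul_nonsing_inv _ hdet, one_mulVec]
  exact congrFun htight i

variable [Fintype ι]

theorem dotProduct_eq_neg_dotProduct_mulVec [NonUnitalCommRing R]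
    (hstat : c + Gᵀ *ᵥ lam = 0) (x : κ → R) : c ⬝ᵥ x = -(lam ⬝ᵥ G *ᵥ x) := by
  rw [eq_neg_of_add_eq_zero_left hstat, neg_dotProduct, mulVec_transpose, dotProduct_mulVec]

theorem dotProduct_eq_neg_dotProduct_of_complementarySlackness [NonUnitalCommRing R]
    (hstat : c + Gᵀ *ᵥ lam = 0) (hslack : ∀ j, lam j = 0 ∨ (G *ᵥ x) j = b j) :
    c ⬝ᵥ x = -(lam ⬝ᵥ b) := by
  have hterm (j : ι) : lam j * (G *ᵥ x) j = lam j * b j := by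
    rcases hslack j with h | h <;> simp only [h, zero_mul]
  rw [dotProduct_eq_neg_dotProduct_mulVec hstat]
  exact congrArg Neg.neg (Finset.sum_congr rfl fun j _ => hterm j)

variable [CommRing R] [PartialOrder R] [IsOrderedRing R]

theorem weak_duality (hlam : 0 ≤ lam) (hstat : c + Gᵀ *ᵥ lam = 0) (hx : G *ᵥ x ≤ b) :
    -(lam ⬝ᵥ b) ≤ c ⬝ᵥ x := by
  rw [dotProduct_eq_neg_dotProduct_mulVec hstat]
  exact neg_le_neg (dotProduct_le_dotProduct_of_nonneg_left hx hlam)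

theorem isLeast_objectiveValues_of_complementarySlackness (hlam : 0 ≤ lam)
    (hstat : c + Gᵀ *ᵥ lam = 0) (hx : G *ᵥ x ≤ b)
    (hslack : ∀ j, lam j = 0 ∨ (G *ᵥ x) j = b j) :
    IsLeast (objectiveValues c G b) (c ⬝ᵥ x) := by
  refine ⟨⟨x, hx, rfl⟩, ?_⟩
  rintro _ ⟨y, hy, rfl⟩
  calc c ⬝ᵥ x = -(lam ⬝ᵥ b) :=
        dotProduct_eq_neg_dotProduct_of_complementarySlackness hstat hslack
    _ ≤ c ⬝ᵥ y := weak_duality hlam hstat hy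

end LinearProgram

open LinearProgram in
theorem stmt4_general {R ι κ : Type*} [CommRing R] [PartialOrder R] [IsOrderedRing R]
    [Fintype ι] [Fintype κ] [DecidableEq κ] {c : κ → R} {G : Matrix ι κ R} {b : ι → R}
    {σ : κ → ι} (hinv : IsUnit (G.submatrix σ id))
    (hlam : ∃ lam : ι → R, 0 ≤ lam ∧ c + Gᵀ *ᵥ lam = 0 ∧ ∀ j ∉ Set.range σ, lam j = 0)
    (hfeas : G *ᵥ basicSolution G b σ ≤ b) :
    IsLeast (objectiveValues c G b) (c ⬝ᵥ basicSolution G b σ) := by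
  obtain ⟨lam, hnonneg, hstat, hsupp⟩ := hlam
  refine isLeast_objectiveValues_of_complementarySlackness hnonneg hstat hfeas fun j => ?_
  by_cases hj : j ∈ Set.range σ
  · obtain ⟨i, rfl⟩ := hj
    exact Or.inr (mulVec_basicSolution_apply hinv b i)
  · exact Or.inl (hsupp j hj)

/-- Under the hypotheses of Statement 3 (index set `J` of cardinality `n`
enumerated by the injection `σ`, `G_J` invertible, and a multiplier `lam ≥ 0` with
`c + Gᵀ lam = 0` supported on `J`), for every `θ` such that `x̂(θ) := G_J⁻¹ (w_J + F_J θ)`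
is feasible, the optimal value of LP(θ) (the infimum of `cᵀx` over the feasible set)
equals `cᵀ G_J⁻¹ (w_J + F_J θ)`; consequently the optimal-value function is affine in `θ`
on this set of parameters. -/
theorem stmt4 {n m p : ℕ}
    (c : Fin n → ℝ) (G : Matrix (Fin m) (Fin n) ℝ) (w : Fin m → ℝ)
    (F : Matrix (Fin m) (Fin p) ℝ)
    (σ : Fin n → Fin m) (hσ : Function.Injective σ)
    (hinv : IsUnit (G.submatrix σ (id : Fin n → Fin n)))
    (hlam : ∃ lam : Fin m → ℝ, (∀ j, 0 ≤ lam j) ∧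
      c + Gᵀ.mulVec lam = 0 ∧ ∀ j : Fin m, j ∉ Set.range σ → lam j = 0) :
    ∀ θ : Fin p → ℝ,
      (∀ j, G.mulVec ((G.submatrix σ (id : Fin n → Fin n))⁻¹.mulVec
          (fun i => w (σ i) + (F.submatrix σ (id : Fin p → Fin p)).mulVec θ i)) j
        ≤ w j + F.mulVec θ j) →
      sInf {v : ℝ | ∃ x : Fin n → ℝ, (∀ j, G.mulVec x j ≤ w j + F.mulVec θ j) ∧ v = c ⬝ᵥ x}
        = c ⬝ᵥ ((G.submatrix σ (id : Fin n → Fin n))⁻¹.mulVec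
          (fun i => w (σ i) + (F.submatrix σ (id : Fin p → Fin p)).mulVec θ i)) :=
  fun θ hfeas => (stmt4_general (b := w + F *ᵥ θ) hinv hlam hfeas).csInf_eq
end
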